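/- (Lower bound for the caloric B^{-1}_{∞,∞} norm of anisotropically scaled data, case α = β.) Let 0 ≤ α < 1 and let f, g, h be Schwartz functions on ℝ. For ε > 0 define ψ^ε(x) = f(ε^α x₁) g(ε^α x₂) h(ε x₃) on ℝ³, and let (f ⊗ g)(x₁, x₂) = f(x₁) g(x₂) on ℝ². Then there exists ε₀ > 0 such that for all 0 < ε < ε₀, sup_{t>0} t^{1/2} ‖H₃(t) ψ^ε‖_{L^∞(ℝ³)} ≥ (1/4) ε^{−α} · ( sup_{t>0} t^{1/2} ‖H₂(t)(f ⊗ g)‖_{L^∞(ℝ²)} ) · ‖h‖_{L^∞(ℝ)}. -/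

import Mathlib

open MeasureTheory

/-- The heat semigroup on `ℝ³`. -/
noncomputable def heat3 (t : ℝ) (φ : EuclideanSpace ℝ (Fin 3) → ℝ)
    (x : EuclideanSpace ℝ (Fin 3)) : ℝ :=
  ∫ y : EuclideanSpace ℝ (Fin 3),
    (4 * Real.pi * t) ^ (-(3 : ℝ) / 2) * Real.exp (-‖x - y‖ ^ 2 / (4 * t)) * φ y

/-- The heat semigroup on `ℝ²`. -/
noncomputable def heat2 (t : ℝ) (φ : EuclideanSpace ℝ (Fin 2) → ℝ)
    (x : EuclideanSpace ℝ (Fin 2)) : ℝ :=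
  ∫ y : EuclideanSpace ℝ (Fin 2),
    (4 * Real.pi * t) ^ (-(2 : ℝ) / 2) * Real.exp (-‖x - y‖ ^ 2 / (4 * t)) * φ y


noncomputable def heat1 (t : ℝ) (φ : ℝ → ℝ) (x : ℝ) : ℝ :=
  ∫ y : ℝ, (4 * Real.pi * t) ^ (-(1 : ℝ) / 2) * Real.exp (-(x - y) ^ 2 / (4 * t)) * φ y

noncomputable def gk (u : ℝ) : ℝ := (4 * Real.pi) ^ (-(1 : ℝ) / 2) * Real.exp (-(1/4) * u ^ 2)

noncomputable def GG (φ : ℝ → ℝ) (σ x : ℝ) : ℝ := ∫ u : ℝ, gk u * φ (x - σ * u)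

lemma gk_nonneg (u : ℝ) : 0 ≤ gk u := by unfold gk; positivity

lemma gk_integrable : Integrable gk :=
  (integrable_exp_neg_mul_sq (by norm_num : (0:ℝ) < 1/4)).const_mul _

lemma gk_integral : ∫ u, gk u = 1 := by
  unfold gk
  rw [integral_const_mul, integral_gaussian, Real.sqrt_eq_rpow]
  rw [show Real.pi / (1/4) = 4 * Real.pi by ring, ← Real.rpow_add (by positivity)]
  norm_num

lemma heat2_eq (t : ℝ) (ht : 0 < t) (f g : ℝ → ℝ) (x : EuclideanSpace ℝ (Fin 2)) :
    heat2 t (fun y => f (y 0) * g (y 1)) x = heat1 t f (x 0) * heat1 t g (x 1) := by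
  have h1 := integral_fintype_prod_volume_eq_prod (ι := Fin 2) (E := fun _ => ℝ) (𝕜 := ℝ)
    (fun i y => (4 * Real.pi * t) ^ (-(1 : ℝ) / 2) * Real.exp (-(x i - y) ^ 2 / (4 * t))
      * (![f, g] i) y)
  simp only [Fin.prod_univ_two] at h1
  unfold heat2 heat1
  refine Eq.trans ?_ h1
  refine Eq.trans ?_
    ((EuclideanSpace.volume_preserving_symm_measurableEquiv_toLp (Fin 2)).integral_comp' _)
  congr 1
  ext y
  simp only [EuclideanSpace.norm_sq_eq, Fin.sum_univ_two]
  have hk : (4 * Real.pi * t) ^ (-(2 : ℝ) / 2) = ((4 * Real.pi * t) ^ (-(1 : ℝ) / 2)) ^ 2 := by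
    rw [← Real.rpow_natCast, ← Real.rpow_mul (by positivity)]; norm_num
  rw [hk]
  simp [neg_add, add_div, Real.exp_add]
  ring

lemma heat3_eq (t : ℝ) (ht : 0 < t) (f g h : ℝ → ℝ) (x : EuclideanSpace ℝ (Fin 3)) :
    heat3 t (fun y => f (y 0) * g (y 1) * h (y 2)) x
      = heat1 t f (x 0) * heat1 t g (x 1) * heat1 t h (x 2) := by
  have h1 := integral_fintype_prod_volume_eq_prod (ι := Fin 3) (E := fun _ => ℝ) (𝕜 := ℝ)
    (fun i y => (4 * Real.pi * t) ^ (-(1 : ℝ) / 2) * Real.exp (-(x i - y) ^ 2 / (4 * t))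
      * (![f, g, h] i) y)
  simp only [Fin.prod_univ_three] at h1
  unfold heat3 heat1
  refine Eq.trans ?_ h1
  refine Eq.trans ?_
    ((EuclideanSpace.volume_preserving_symm_measurableEquiv_toLp (Fin 3)).integral_comp' _)
  congr 1
  ext y
  simp only [EuclideanSpace.norm_sq_eq, Fin.sum_univ_three]
  have hk : (4 * Real.pi * t) ^ (-(3 : ℝ) / 2) = ((4 * Real.pi * t) ^ (-(1 : ℝ) / 2)) ^ 3 := by
    rw [← Real.rpow_natCast, ← Real.rpow_mul (by positivity)]; norm_num
  rw [hk]
  simp [neg_add, add_div, Real.exp_add]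
  ring

lemma heat1_eq (σ : ℝ) (hσ : 0 < σ) (φ : ℝ → ℝ) (x : ℝ) :
    heat1 (σ ^ 2) φ x = GG φ σ x := by
  unfold heat1 GG
  set F : ℝ → ℝ := fun y => (4 * Real.pi * σ ^ 2) ^ (-(1 : ℝ) / 2) *
    Real.exp (-(x - y) ^ 2 / (4 * σ ^ 2)) * φ y with hF
  have h1 : ∫ u, F (x - σ * u) = |σ⁻¹| • ∫ y, F (x - y) :=
    Measure.integral_comp_mul_left (fun y => F (x - y)) σ
  rw [integral_sub_left_eq_self F volume x, abs_of_pos (inv_pos.2 hσ), smul_eq_mul] at h1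
  have h2 : ∫ y, F y = σ * ∫ u, F (x - σ * u) := by rw [h1]; field_simp
  rw [h2, ← integral_const_mul]
  congr 1
  ext u
  have e1 : (4 * Real.pi * σ ^ 2) ^ (-(1 : ℝ) / 2) = (4 * Real.pi) ^ (-(1 : ℝ) / 2) * σ⁻¹ := by
    rw [Real.mul_rpow (by positivity) (by positivity), ← Real.rpow_natCast σ 2,
      ← Real.rpow_mul hσ.le, ← Real.rpow_neg_one σ]
    norm_num
  have e2 : -(x - (x - σ * u)) ^ 2 / (4 * σ ^ 2) = -(1/4) * u ^ 2 := by field_simp; ring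
  simp only [hF, gk]
  rw [e1, e2]
  field_simp

lemma GG_scale (φ : ℝ → ℝ) (c σ x : ℝ) : GG (fun y => φ (c * y)) σ x = GG φ (c * σ) (c * x) := by
  unfold GG
  simp only [mul_sub, mul_assoc]

lemma GG_zero (φ : ℝ → ℝ) (x : ℝ) : GG φ 0 x = φ x := by
  unfold GG
  simp [integral_mul_const, gk_integral]

lemma schwartz_bdd (f : SchwartzMap ℝ ℝ) : ∃ C, 0 ≤ C ∧ ∀ x, |f x| ≤ C := by
  obtain ⟨C, hC⟩ := f.decay 0 0
  refine ⟨C, hC.1.le, fun x => ?_⟩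
  simpa using hC.2 x

lemma GG_cont (f : SchwartzMap ℝ ℝ) : Continuous (fun p : ℝ × ℝ => GG f p.1 p.2) := by
  obtain ⟨C, hC0, hC⟩ := schwartz_bdd f
  have hg : Continuous gk := by unfold gk; fun_prop
  have hf := f.continuous
  unfold GG
  refine continuous_of_dominated (bound := fun u => gk u * C) ?_ ?_ ?_ ?_
  · intro p
    exact (by fun_prop : Continuous fun u => gk u * f (p.2 - p.1 * u)).aestronglyMeasurable
  · intro p
    refine Filter.Eventually.of_forall fun u => ?_
    rw [norm_mul, Real.norm_of_nonneg (gk_nonneg u)]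
    exact mul_le_mul_of_nonneg_left (hC _) (gk_nonneg u)
  · exact gk_integrable.mul_const C
  · exact Filter.Eventually.of_forall fun u => by fun_prop

lemma GG_bdd (f : ℝ → ℝ) (C : ℝ) (hC : ∀ x, |f x| ≤ C) (σ x : ℝ) : |GG f σ x| ≤ C := by
  unfold GG
  rw [← Real.norm_eq_abs]
  have := norm_integral_le_of_norm_le (f := fun u => gk u * f (x - σ * u))
    (gk_integrable.mul_const C) (Filter.Eventually.of_forall fun u => by
      rw [norm_mul, Real.norm_of_nonneg (gk_nonneg u)]
      exact mul_le_mul_of_nonneg_left (hC _) (gk_nonneg u))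
  rwa [integral_mul_const, gk_integral, one_mul] at this

lemma heat1_L1 (f : SchwartzMap ℝ ℝ) (σ x : ℝ) (hσ : 0 < σ) :
    σ * |GG f σ x| ≤ (4 * Real.pi) ^ (-(1 : ℝ) / 2) * ∫ y, |f y| := by
  have hi : Integrable (fun y => |f y|) := f.integrable.abs
  have hb : ∀ u, |gk u| ≤ (4 * Real.pi) ^ (-(1 : ℝ) / 2) := by
    intro u
    rw [abs_of_nonneg (gk_nonneg u)]
    unfold gk
    have : Real.exp (-(1/4) * u ^ 2) ≤ 1 := Real.exp_le_one_iff.2 (by nlinarith [sq_nonneg u])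
    exact mul_le_of_le_one_right (by positivity) this
  have h1 : ∫ u, |f (x - σ * u)| = |σ⁻¹| • ∫ y, |f (x - y)| :=
    Measure.integral_comp_mul_left (fun y => |f (x - y)|) σ
  rw [integral_sub_left_eq_self (fun y => |f y|) volume x, abs_of_pos (inv_pos.2 hσ),
    smul_eq_mul] at h1
  have hi2 : Integrable (fun u => |f (x - σ * u)|) :=
    Integrable.comp_mul_left' (g := fun y => |f (x - y)|) (hi.comp_sub_left x) hσ.ne'
  have h2 := norm_integral_le_of_norm_le (f := fun u => gk u * f (x - σ * u))
    (hi2.const_mul ((4 * Real.pi) ^ (-(1 : ℝ) / 2))) (Filter.Eventually.of_forall fun u => by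
      rw [norm_mul]
      exact mul_le_mul_of_nonneg_right (hb u) (norm_nonneg _))
  rw [integral_const_mul, h1] at h2
  calc σ * |GG f σ x| ≤ σ * ((4 * Real.pi) ^ (-(1 : ℝ) / 2) * (σ⁻¹ * ∫ y, |f y|)) :=
        mul_le_mul_of_nonneg_left h2 hσ.le
    _ = _ := by field_simp

lemma le_eLpNorm_top {X : Type*} [TopologicalSpace X] [MeasurableSpace X] (μ : Measure X)
    [μ.IsOpenPosMeasure] (φ : X → ℝ) (hφ : Continuous φ) (x : X) :
    ENNReal.ofReal |φ x| ≤ eLpNorm φ ⊤ μ := by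
  rw [eLpNorm_exponent_top, ← Real.norm_eq_abs, ofReal_norm]
  by_contra hlt
  push Not at hlt
  have hae := ae_lt_of_essSup_lt (f := fun y => ‖φ y‖ₑ) (x := ‖φ x‖ₑ) (μ := μ) hlt
  have hopen : IsOpen {y | eLpNormEssSup φ μ < ‖φ y‖ₑ} :=
    isOpen_lt continuous_const hφ.enorm
  have h0 : μ {y | eLpNormEssSup φ μ < ‖φ y‖ₑ} = 0 := by
    have := enorm_ae_le_eLpNormEssSup φ μ
    rw [ae_iff] at this
    simpa using this
  exact (hopen.measure_pos μ ⟨x, hlt⟩).ne' h0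

lemma eLpNorm_top_le {X : Type*} [MeasurableSpace X] (μ : Measure X) (φ : X → ℝ) (B : ENNReal)
    (h : ∀ x, ENNReal.ofReal |φ x| ≤ B) : eLpNorm φ ⊤ μ ≤ B := by
  rw [eLpNorm_exponent_top]
  refine essSup_le_of_ae_le _ (Filter.Eventually.of_forall fun x => ?_)
  have := h x
  rwa [← Real.norm_eq_abs, ofReal_norm] at this

/-- Lower bound for the caloric `Ḃ^{-1}_{∞,∞}` norm of anisotropically scaled data
(case `α = β`): for `ψ^ε(x) = f(ε^α x₁) g(ε^α x₂) h(ε x₃)` and `ε` small enough,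
`sup_{t>0} t^{1/2} ‖H₃(t)ψ^ε‖_{L^∞} ≥ (1/4) ε^{−α} (sup_{t>0} t^{1/2} ‖H₂(t)(f⊗g)‖_{L^∞})
‖h‖_{L^∞}`. -/
theorem caloric_besov_lower_bound_of_eq (α : ℝ) (hα0 : 0 ≤ α) (hα1 : α < 1)
    (f g h : SchwartzMap ℝ ℝ) :
    ∃ ε₀ > 0, ∀ ε : ℝ, 0 < ε → ε < ε₀ →
      ENNReal.ofReal ((1 / 4 : ℝ) * ε ^ (-α)) *
          (⨆ (t : ℝ) (_ : 0 < t),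
            ENNReal.ofReal (t ^ ((1 : ℝ) / 2)) *
              eLpNorm
                (heat2 t (fun y : EuclideanSpace ℝ (Fin 2) => f (y 0) * g (y 1))) ⊤
                volume) *
          eLpNorm (⇑h) ⊤ volume ≤
        ⨆ (t : ℝ) (_ : 0 < t),
          ENNReal.ofReal (t ^ ((1 : ℝ) / 2)) *
            eLpNorm
              (heat3 t (fun z => f (ε ^ α * z 0) * g (ε ^ α * z 1) * h (ε * z 2))) ⊤
              volume := by
  set S : ENNReal := ⨆ (t : ℝ) (_ : 0 < t), ENNReal.ofReal (t ^ ((1 : ℝ) / 2)) *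
    eLpNorm (heat2 t (fun y : EuclideanSpace ℝ (Fin 2) => f (y 0) * g (y 1))) ⊤ volume with hS
  set M : ENNReal := eLpNorm (⇑h) ⊤ volume with hM
  by_cases hS0 : S = 0
  · exact ⟨1, one_pos, fun ε _ _ => by simp [hS0]⟩
  by_cases hM0 : M = 0
  · exact ⟨1, one_pos, fun ε _ _ => by simp [hM0]⟩
  have hsq : ∀ t : ℝ, 0 < t → ∃ σ : ℝ, 0 < σ ∧ t = σ ^ 2 ∧ t ^ ((1 : ℝ) / 2) = σ := fun t ht =>
    ⟨√t, Real.sqrt_pos.2 ht, (Real.sq_sqrt ht.le).symm, (Real.sqrt_eq_rpow t).symm⟩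
  have key : ∀ B : ENNReal, (∀ σ a b : ℝ, 0 < σ →
      ENNReal.ofReal (σ * |GG f σ a * GG g σ b|) ≤ B) → S ≤ B := by
    intro B hB
    refine iSup₂_le fun t ht => ?_
    obtain ⟨σ, hσ, hts, htr⟩ := hsq t ht
    rw [htr, mul_comm]
    have hne : ENNReal.ofReal σ ≠ 0 := by simpa using hσ
    rw [← ENNReal.le_div_iff_mul_le (Or.inl hne) (Or.inl ENNReal.ofReal_ne_top)]
    refine eLpNorm_top_le _ _ _ fun x => ?_
    rw [ENNReal.le_div_iff_mul_le (Or.inl hne) (Or.inl ENNReal.ofReal_ne_top), mul_comm,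
      ← ENNReal.ofReal_mul hσ.le, heat2_eq t ht, hts, heat1_eq σ hσ, heat1_eq σ hσ]
    exact hB σ _ _ hσ
  have hSfin : S ≠ ⊤ := by
    obtain ⟨C, hC0, hC⟩ := schwartz_bdd g
    refine ne_top_of_le_ne_top (ENNReal.ofReal_ne_top
      (r := ((4 * Real.pi) ^ (-(1 : ℝ) / 2) * ∫ y, |f y|) * C)) (key _ fun σ a b hσ => ?_)
    apply ENNReal.ofReal_le_ofReal
    rw [abs_mul, ← mul_assoc]
    have h1 := heat1_L1 f σ a hσ
    have h0 : 0 ≤ σ * |GG f σ a| := by positivity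
    exact mul_le_mul h1 (GG_bdd g C hC σ b) (abs_nonneg _) (h0.trans h1)
  have hMfin : M ≠ ⊤ := by
    obtain ⟨C, hC0, hC⟩ := schwartz_bdd h
    exact ne_top_of_le_ne_top (ENNReal.ofReal_ne_top (r := C))
      (eLpNorm_top_le _ _ _ fun x => ENNReal.ofReal_le_ofReal (hC x))
  obtain ⟨σ, a, b, hσ, hab⟩ : ∃ σ a b : ℝ, 0 < σ ∧
      S / 2 < ENNReal.ofReal (σ * |GG f σ a * GG g σ b|) := by
    by_contra hcon
    push Not at hcon
    exact absurd (key _ hcon) (not_le.2 (ENNReal.half_lt_self hS0 hSfin))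
  obtain ⟨y, hy⟩ : ∃ y, M / 2 < ENNReal.ofReal |h y| := by
    by_contra hcon
    push Not at hcon
    exact absurd (eLpNorm_top_le volume h _ hcon) (not_le.2 (ENNReal.half_lt_self hM0 hMfin))
  have hlim : Filter.Tendsto (fun ε : ℝ => ENNReal.ofReal |GG h (ε ^ (1 - α) * σ) y|)
      (nhds 0) (nhds (ENNReal.ofReal |h y|)) := by
    have c1 : Continuous (fun ε : ℝ => ENNReal.ofReal |GG h (ε ^ (1 - α) * σ) y|) := by
      have c2 : Continuous (fun ε : ℝ => (ε ^ (1 - α) * σ, y)) := by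
        have : Continuous (fun ε : ℝ => ε ^ (1 - α)) :=
          Real.continuous_rpow_const (by linarith)
        fun_prop
      exact ENNReal.continuous_ofReal.comp ((GG_cont h).comp c2).abs
    have := c1.tendsto 0
    rwa [Real.zero_rpow (by linarith : (1 - α) ≠ 0), zero_mul, GG_zero] at this
  obtain ⟨ε₀, hε₀, hball⟩ := Metric.eventually_nhds_iff.1 (hlim.eventually_const_lt hy)
  refine ⟨ε₀, hε₀, fun ε hε hlt => ?_⟩
  have hy' := hball (y := ε) (by rwa [Real.dist_eq, sub_zero, abs_of_pos hε])
  set c := ε ^ α with hc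
  have hcpos : 0 < c := Real.rpow_pos_of_pos hε α
  have hcinv : ε ^ (-α) = c⁻¹ := Real.rpow_neg hε.le α
  have hεc : ε ^ (1 - α) * σ = ε * (σ / c) := by
    rw [Real.rpow_sub hε, Real.rpow_one]; ring
  have hτ : 0 < σ / c := by positivity
  have heq : ∀ x, heat3 ((σ / c) ^ 2) (fun z => f (c * z 0) * g (c * z 1) * h (ε * z 2)) x
      = GG f σ (c * x 0) * GG g σ (c * x 1) * GG h (ε * (σ / c)) (ε * x 2) := by
    intro x
    rw [heat3_eq _ (by positivity) (fun u => f (c * u)) (fun u => g (c * u)) (fun u => h (ε * u)),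
      heat1_eq _ hτ, heat1_eq _ hτ, heat1_eq _ hτ, GG_scale, GG_scale, GG_scale,
      mul_div_cancel₀ σ hcpos.ne']
  refine le_trans ?_ (le_iSup₂_of_le ((σ / c) ^ 2) (by positivity) le_rfl)
  have hpow : ((σ / c) ^ 2) ^ ((1 : ℝ) / 2) = σ / c := by
    rw [← Real.sqrt_eq_rpow, Real.sqrt_sq hτ.le]
  have hcont : Continuous
      (heat3 ((σ / c) ^ 2) (fun z => f (c * z 0) * g (c * z 1) * h (ε * z 2))) := by
    rw [funext heq]
    have k : ∀ (φ : SchwartzMap ℝ ℝ) (s r : ℝ) (i : Fin 3),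
        Continuous (fun x : EuclideanSpace ℝ (Fin 3) => GG φ s (r * x i)) := fun φ s r i =>
      (GG_cont φ).comp (by fun_prop : Continuous fun x : EuclideanSpace ℝ (Fin 3) => (s, r * x i))
    exact ((k f _ _ 0).mul (k g _ _ 1)).mul (k h _ _ 2)
  have hpt := le_eLpNorm_top volume _ hcont (!₂[a / c, b / c, y / ε])
  rw [heq] at hpt
  have ea : c * (!₂[a / c, b / c, y / ε] : EuclideanSpace ℝ (Fin 3)) 0 = a := by
    simp; field_simp
  have eb : c * (!₂[a / c, b / c, y / ε] : EuclideanSpace ℝ (Fin 3)) 1 = b := by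
    simp; field_simp
  have ey : ε * (!₂[a / c, b / c, y / ε] : EuclideanSpace ℝ (Fin 3)) 2 = y := by
    simp; field_simp
  rw [ea, eb, ey] at hpt
  rw [hpow]
  refine le_trans ?_ (mul_le_mul_right hpt _)
  rw [hεc] at hy'
  have h4 : ENNReal.ofReal (1 / 4 * ε ^ (-α)) * S * M
      = ENNReal.ofReal c⁻¹ * (S / 2) * (M / 2) := by
    have : ENNReal.ofReal (1 / 4) = 2⁻¹ * 2⁻¹ := by
      rw [show (1 / 4 : ℝ) = 2⁻¹ * 2⁻¹ by norm_num, ENNReal.ofReal_mul (by norm_num),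
        ENNReal.ofReal_inv_of_pos (by norm_num)]
      norm_num
    rw [hcinv, ENNReal.ofReal_mul (by norm_num), this, div_eq_mul_inv, div_eq_mul_inv]
    ring
  rw [h4]
  calc ENNReal.ofReal c⁻¹ * (S / 2) * (M / 2)
      ≤ ENNReal.ofReal c⁻¹ * ENNReal.ofReal (σ * |GG f σ a * GG g σ b|)
        * ENNReal.ofReal |GG h (ε * (σ / c)) y| := by gcongr
    _ = _ := by
      rw [← ENNReal.ofReal_mul (by positivity), ← ENNReal.ofReal_mul (by positivity),
        ← ENNReal.ofReal_mul (by positivity), abs_mul (GG f σ a * GG g σ b)]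
      congr 1
      field_simp
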